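/- For every integer d ≥ 2 there exists a finite set V with |V| = 2d and a 2-coloring c of the complete digraph on V such that V cannot be covered by fewer than 2d monochromatic d-dominating subgraphs. -/

import Mathlib

/-!
Give every vertex a color, each color being used `d` times, and let an edge `s → w` take the color
of `w` if `s = w` and the other color if not. In color `j` a vertex of color `j` dominates only
itself, and any other vertex dominates everything except itself. So in a `d`-dominating subgraph of
color `j` the vertices not of color `j`, being at most `d`, would need a common dominator, and none
is available; hence there are no such vertices. The remaining vertices dominate only themselves, so
there is just one of them as soon as pairs have to be dominated.
-/

/-- The two colors for 2-colorings of complete digraphs. -/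
inductive Color where
  | red : Color
  | blue : Color

/-- `U`, together with the color `j`, is the vertex set of a monochromatic `d`-dominating
subgraph of the complete digraph on `V` 2-colored by `c`. -/
def IsMonoDom {V : Type*} (c : V → V → Color) (d : ℕ) (j : Color) (U : Set V) : Prop :=
  ∀ S : Finset V, ↑S ⊆ U → S.Nonempty → S.card ≤ d →
    ∃ w ∈ U, ∀ s ∈ S, c s w = j

/-- The color other than the given one. -/
def Color.swap : Color → Color
  | red => blue
  | blue => red

theorem Color.swap_eq_iff_ne {i j : Color} : i.swap = j ↔ i ≠ j := by
  cases i <;> cases j <;> simp [swap]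

open Classical in
/-- The 2-coloring of the complete digraph on `V` whose loops are colored by `ℓ` and whose other
edges receive the color opposite to that of the loop at their head. -/
noncomputable def loopColoring {V : Type*} (ℓ : V → Color) (s w : V) : Color :=
  if s = w then ℓ w else (ℓ w).swap

section LoopColoring

variable {V : Type*} {ℓ : V → Color} {d : ℕ} {j : Color} {U : Set V}

theorem loopColoring_eq_iff {s w : V} : loopColoring ℓ s w = j ↔ (s = w ↔ ℓ w = j) := by
  by_cases hsw : s = w <;> simp [loopColoring, hsw, Color.swap_eq_iff_ne]

theorem IsMonoDom.loop_eq_of_encard_le (h : IsMonoDom (loopColoring ℓ) d j U)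
    (hcard : {v ∈ U | ℓ v ≠ j}.encard ≤ d) {v : V} (hv : v ∈ U) : ℓ v = j := by
  by_contra hvj
  have hfin : {v ∈ U | ℓ v ≠ j}.Finite := Set.finite_of_encard_le_coe hcard
  rw [hfin.encard_eq_coe_toFinset_card, Nat.cast_le] at hcard
  obtain ⟨w, hwU, hw⟩ := h hfin.toFinset (by simp) ⟨v, by simp [hv, hvj]⟩ hcard
  simp only [Set.Finite.mem_toFinset, Set.mem_ofPred_eq, loopColoring_eq_iff] at hw
  have hwj : ℓ w = j := by
    by_contra hwj
    exact hwj ((hw w ⟨hwU, hwj⟩).mp rfl)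
  have hvw : v = w := (hw v ⟨hv, hvj⟩).mpr hwj
  exact hvj (hvw ▸ hwj)

theorem IsMonoDom.subsingleton_of_loop_eq (h : IsMonoDom (loopColoring ℓ) d j U) (hd : 2 ≤ d)
    (hU : ∀ v ∈ U, ℓ v = j) : U.Subsingleton := by
  classical
  intro x hx y hy
  obtain ⟨w, hwU, hw⟩ := h {x, y} (by simp [Set.pair_subset hx hy]) (Finset.insert_nonempty x {y})
    (Finset.card_le_two.trans hd)
  have eq_dominator : ∀ s ∈ ({x, y} : Finset V), s = w := fun s hs =>
    (loopColoring_eq_iff.mp (hw s hs)).mpr (hU w hwU)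
  exact (eq_dominator x (by simp)).trans (eq_dominator y (by simp)).symm

end LoopColoring

theorem enatCard_le_of_iUnion_eq_univ_of_subsingleton {V ι : Type*} {U : ι → Set V}
    (hcover : ⋃ i, U i = Set.univ) (hU : ∀ i, (U i).Subsingleton) :
    ENat.card V ≤ ENat.card ι := by
  choose f hf using Set.iUnion_eq_univ_iff.mp hcover
  have hf_inj : Function.Injective f := fun x y hxy => hU (f x) (hf x) (hxy ▸ hf y)
  exact ENat.card_le_card_of_injective hf_inj

theorem enatCard_le_of_loopColoring_cover {V ι : Type*} {ℓ : V → Color} {d : ℕ} {U : ι → Set V}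
    {j : ι → Color} (hd : 2 ≤ d) (hℓ : ∀ k, {v | ℓ v ≠ k}.encard ≤ d)
    (hcover : ⋃ i, U i = Set.univ) (hdom : ∀ i, IsMonoDom (loopColoring ℓ) d (j i) (U i)) :
    ENat.card V ≤ ENat.card ι := by
  refine enatCard_le_of_iUnion_eq_univ_of_subsingleton hcover fun i => ?_
  have hcard : {v ∈ U i | ℓ v ≠ j i}.encard ≤ d :=
    (Set.encard_le_encard fun _ hv => hv.2).trans (hℓ (j i))
  exact (hdom i).subsingleton_of_loop_eq hd fun _ => (hdom i).loop_eq_of_encard_le hcard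

/-- The coloring of the disjoint union of two copies of `α` that makes the left copy red and the
right copy blue, so that both colors are used equally often. -/
def sumColor (α : Type*) : α ⊕ α → Color :=
  Sum.elim (fun _ => Color.red) (fun _ => Color.blue)

theorem encard_sumColor_ne (α : Type*) (j : Color) :
    {v | sumColor α v ≠ j}.encard = ENat.card α := by
  cases j with
  | red =>
    have : {v | sumColor α v ≠ .red} = Set.range Sum.inr := by
      ext (a | a) <;> simp [sumColor]
    rw [this, ← Set.image_univ, Sum.inr_injective.encard_image, Set.encard_univ]
  | blue =>
    have : {v | sumColor α v ≠ .blue} = Set.range Sum.inl := by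
      ext (a | a) <;> simp [sumColor]
    rw [this, ← Set.image_univ, Sum.inl_injective.encard_image, Set.encard_univ]

/-- For every `d ≥ 2` there is a finite vertex set of size `2d` and a 2-coloring of the
complete digraph on it that cannot be covered by fewer than `2d` monochromatic
`d`-dominating subgraphs. -/
theorem lower_bound_two_d (d : ℕ) (hd : 2 ≤ d) :
    ∃ (V : Type) (inst : Fintype V) (c : V → V → Color),
      @Fintype.card V inst = 2 * d ∧
      ∀ (t : ℕ) (U : Fin t → Set V) (j : Fin t → Color),
        (⋃ i, U i) = Set.univ → (∀ i, IsMonoDom c d (j i) (U i)) → 2 * d ≤ t := by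
  refine ⟨Fin d ⊕ Fin d, inferInstance, loopColoring (sumColor (Fin d)), by simp [two_mul], ?_⟩
  intro t U j hcover hdom
  have hclass (k : Color) : {v | sumColor (Fin d) v ≠ k}.encard ≤ d := by
    simp [encard_sumColor_ne]
  have hcard : ENat.card (Fin d ⊕ Fin d) ≤ ENat.card (Fin t) :=
    enatCard_le_of_loopColoring_cover hd hclass hcover hdom
  rw [ENat.card_eq_coe_fintype_card, ENat.card_eq_coe_fintype_card, Nat.cast_le] at hcard
  simpa [two_mul] using hcard
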